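/- Let g : ℤ → ℝ be bounded with δ(g) > 0. Then H_g does not have SULE: there is no complete orthonormal set {φ_s} of eigenfunctions of H_g in ℓ²(ℤ), points n_s ∈ ℤ, and γ > 0 such that for every ε > 0 there is a constant C_ε with |φ_s(n)| ≤ C_ε·e^{ε|n_s|}·e^{−γ|n−n_s|} for all s and all n ∈ ℤ. -/

import Mathlib

noncomputable section

open Filter Real

def distToInt (x : ℝ) : ℝ := |x - round x|

def IsDiophantine (α : ℝ) : Prop :=
  ∃ κ τ : ℝ, 0 < κ ∧ 0 < τ ∧ ∀ k : ℤ, k ≠ 0 → τ / |(k : ℝ)| ^ κ ≤ distToInt (k * α)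

def deltaPhase (α θ : ℝ) : ℝ :=
  limsup (fun n : ℤ => -Real.log (distToInt (2 * θ + n * α)) / |(n : ℝ)|) cofinite

def amoPot (lam α θ : ℝ) : ℤ → ℝ := fun n => 2 * lam * Real.cos (2 * Real.pi * (θ + n * α))

def IsEigenfunction (g : ℤ → ℝ) (E : ℝ) (φ : ℤ → ℝ) : Prop :=
  ∀ n : ℤ, φ (n + 1) + φ (n - 1) + g n * φ n = E * φ n

def deltaPot (g : ℤ → ℝ) : ℝ :=
  limsup (fun n : ℤ => -Real.log (⨆ m : ℤ, |g (n - m) - g m|) / |(n : ℝ)|) cofinite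

def matNorm (M : Matrix (Fin 2) (Fin 2) ℝ) : ℝ := ⨆ p : Fin 2 × Fin 2, |M p.1 p.2|

def transfer (g : ℤ → ℝ) (E : ℝ) : ℕ → ℤ → Matrix (Fin 2) (Fin 2) ℝ
  | 0, _ => 1
  | n + 1, k => !![E - g (k + n), -1; 1, 0] * transfer g E n k

def LyapSup (g : ℤ → ℝ) (E : ℝ) : ℝ :=
  limsup (fun n : ℕ => ⨆ k : ℤ, Real.log (matNorm (transfer g E n k)) / n) atTop

def HasSULE (g : ℤ → ℝ) : Prop :=
  ∃ (Φ : HilbertBasis ℕ ℝ (lp (fun _ : ℤ => ℝ) 2)) (ns : ℕ → ℤ) (γ : ℝ),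
    0 < γ ∧
    (∀ s : ℕ, ∃ E : ℝ, IsEigenfunction g E (fun n => Φ s n)) ∧
    ∀ ε : ℝ, 0 < ε → ∃ C : ℝ,
      ∀ (s : ℕ) (n : ℤ),
        |Φ s n| ≤ C * Real.exp (ε * |(ns s : ℝ)|) * Real.exp (-γ * |(n : ℝ) - (ns s : ℝ)|)

/-! Suppose `H_g` has SULE. The correlations `|φ_s(p) φ_s(n)|` then decay exponentially in `|n - p|`
up to a factor `e^{ε|p|}`, and summing them over `n` shows that at every site `p` some `φ_s(p)` is
at least of size `e^{-O(ε|p|)}`. On the other hand `δ(g) > 0` yields infinitely many `N` for which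
`g` is `e^{-d|N|}`-close to its reflection in `N/2`. The Wronskian of an eigenfunction `φ` and its
reflection is then tiny, which near `N/2` forces `φ(n) ≈ ± φ(N - n)`, and a Gronwall estimate keeps
this true up to distance `β|N|` for some `β > 0`. At a point `p` at that distance
`φ_s(p)² ≈ |φ_s(p) φ_s(N - p)|`, which the decay of correlations makes exponentially small in `|N|`
uniformly in `s`. This contradicts the lower bound once `ε` is small and `|N|` is large. -/

open scoped lp

section SquareSummable

variable {ι κ : Type*}

lemma abs_le_one_of_hasSum_sq {u : ι → ℝ} (hu : HasSum (fun i => u i ^ 2) 1) (i : ι) :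
    |u i| ≤ 1 :=
  (sq_le_one_iff_abs_le_one _).1 (le_hasSum hu i fun _ _ => sq_nonneg _)

lemma abs_mul_le_half_sq_add_sq (x y : ℝ) : |x * y| ≤ (x ^ 2 + y ^ 2) / 2 := by
  have h := two_mul_le_add_sq |x| |y|
  rw [sq_abs, sq_abs] at h
  rw [abs_mul]
  linarith

lemma summable_abs_mul {u v : ι → ℝ} (hu : Summable fun i => u i ^ 2)
    (hv : Summable fun i => v i ^ 2) : Summable fun i => |u i * v i| :=
  .of_nonneg_of_le (fun _ => abs_nonneg _) (fun _ => abs_mul_le_half_sq_add_sq _ _)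
    ((hu.add hv).div_const 2)

lemma tsum_abs_mul_le_one {u v : ι → ℝ} (hu : HasSum (fun i => u i ^ 2) 1)
    (hv : HasSum (fun i => v i ^ 2) 1) : ∑' i, |u i * v i| ≤ 1 := by
  have h := hasSum_le (fun i => abs_mul_le_half_sq_add_sq (u i) (v i))
    (summable_abs_mul hu.summable hv.summable).hasSum ((hu.add hv).div_const 2)
  linarith

lemma tendsto_cofinite_zero_of_summable_sq {u : ι → ℝ} (hu : Summable fun i => u i ^ 2) :
    Tendsto u cofinite (nhds 0) := by
  rw [tendsto_zero_iff_abs_tendsto_zero]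
  simpa [Function.comp_def, sqrt_sq_eq_abs] using hu.tendsto_cofinite_zero.sqrt

lemma hasSum_sq_of_norm_eq_one {x : ℓ²(κ, ℝ)} (hx : ‖x‖ = 1) : HasSum (fun n => x n ^ 2) 1 := by
  simpa [← sq, hx] using lp.hasSum_inner (𝕜 := ℝ) x x

lemma hasSum_sq_hilbertBasis_apply (Φ : HilbertBasis ι ℝ ℓ²(κ, ℝ)) (p : κ) :
    HasSum (fun s => Φ s p ^ 2) 1 := by
  classical
  have h := Φ.hasSum_inner_mul_inner (lp.single 2 p (1 : ℝ)) (lp.single 2 p (1 : ℝ))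
  simpa [lp.inner_single_left, lp.inner_single_right, sq] using h

lemma nonempty_of_hilbertBasis (Φ : HilbertBasis ι ℝ ℓ²(κ, ℝ)) (p : κ) : Nonempty ι :=
  not_isEmpty_iff.1 fun _ => zero_ne_one (hasSum_empty.unique (hasSum_sq_hilbertBasis_apply Φ p))

lemma one_le_tsum_of_abs_mul_le (Φ : HilbertBasis ι ℝ ℓ²(κ, ℝ)) (p : κ) {u : κ → ℝ}
    (hu : Summable u) (hΦ : ∀ s n, |Φ s p * Φ s n| ≤ u n) : 1 ≤ ∑' n, u n := by
  have hcol := hasSum_sq_hilbertBasis_apply Φ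
  have hrow s : HasSum (fun n => Φ s n ^ 2) 1 := hasSum_sq_of_norm_eq_one (Φ.orthonormal.1 s)
  refine hasSum_le_of_sum_le (hcol p) fun S => ?_
  have hS : HasSum (fun n => ∑ s ∈ S, Φ s p ^ 2 * Φ s n ^ 2) (∑ s ∈ S, Φ s p ^ 2) :=
    hasSum_sum fun s _ => by simpa using (hrow s).mul_left (Φ s p ^ 2)
  refine hasSum_le (fun n => ?_) hS hu.hasSum
  obtain ⟨t⟩ := nonempty_of_hilbertBasis Φ p
  have hu0 : 0 ≤ u n := (abs_nonneg _).trans (hΦ t n)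
  calc ∑ s ∈ S, Φ s p ^ 2 * Φ s n ^ 2
      = ∑ s ∈ S, |Φ s p * Φ s n| * |Φ s p * Φ s n| := by
        simp only [← mul_pow, ← sq, sq_abs]
    _ ≤ ∑ s ∈ S, u n * |Φ s p * Φ s n| := by gcongr with s; exact hΦ s n
    _ = u n * ∑ s ∈ S, |Φ s p * Φ s n| := by rw [Finset.mul_sum]
    _ ≤ u n * 1 := by
        gcongr
        exact ((summable_abs_mul (hcol p).summable (hcol n).summable).sum_le_tsum S
          fun _ _ => abs_nonneg _).trans (tsum_abs_mul_le_one (hcol p) (hcol n))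
    _ = u n := mul_one _

end SquareSummable

section ExponentialSums

lemma summable_exp_neg_mul_abs {a : ℝ} (ha : 0 < a) :
    Summable fun n : ℤ => exp (-a * |(n : ℝ)|) := by
  have h : Summable fun n : ℕ => exp (-a * n) := by
    simpa [mul_comm] using summable_exp_nat_mul_iff.2 (neg_lt_zero.2 ha)
  exact .of_nat_of_neg (by simpa using h) (by simpa using h)

lemma hasSum_exp_neg_mul_abs_sub {a : ℝ} (ha : 0 < a) (p : ℤ) :
    HasSum (fun n : ℤ => exp (-a * |(n : ℝ) - p|)) (∑' n : ℤ, exp (-a * |(n : ℝ)|)) := by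
  simpa [Function.comp_def] using
    (Equiv.subRight p).hasSum_iff.2 (summable_exp_neg_mul_abs ha).hasSum

lemma eventually_mul_exp_neg_mul_abs_lt_one (K : ℝ) {a : ℝ} (ha : 0 < a) :
    ∀ᶠ N : ℤ in cofinite, K * exp (-a * |(N : ℝ)|) < 1 := by
  have habs : Tendsto (fun N : ℤ => |(N : ℝ)|) cofinite atTop :=
    tendsto_norm_cocompact_atTop.comp Int.tendsto_coe_cofinite
  have hlim : Tendsto (fun N : ℤ => K * exp (-a * |(N : ℝ)|)) cofinite (nhds 0) := by
    simpa [Function.comp_def] using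
      (tendsto_exp_neg_atTop_nhds_zero.comp (habs.const_mul_atTop ha)).const_mul K
  exact hlim.eventually_lt_const one_pos

/- The correlations at `p` are bounded both by `√A` and by `(D e^{-a|n-p|})²`; their geometric mean
is summable in `n` and still carries a power of `A`. -/
lemma one_le_mul_pow_of_correlation_decay {ι : Type*} (Φ : HilbertBasis ι ℝ ℓ²(ℤ, ℝ)) (p : ℤ)
    {A D a : ℝ} (ha : 0 < a) (hA : ∀ s, Φ s p ^ 2 ≤ A)
    (hD : ∀ s n, |Φ s p * Φ s n| ≤ (D * exp (-a * |(n : ℝ) - p|)) ^ 2) :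
    1 ≤ A * (D * ∑' n : ℤ, exp (-a * |(n : ℝ)|)) ^ 4 := by
  set T := ∑' n : ℤ, exp (-a * |(n : ℝ)|)
  set t := √√A
  have hsum := (hasSum_exp_neg_mul_abs_sub ha p).mul_left (t * |D|)
  have hbound s n : |Φ s p * Φ s n| ≤ t * |D| * exp (-a * |(n : ℝ) - p|) := by
    have hp : |Φ s p * Φ s n| ≤ t ^ 2 := by
      rw [sq_sqrt (sqrt_nonneg A), abs_mul]
      exact (mul_le_of_le_one_right (abs_nonneg _) (abs_le_one_of_hasSum_sq
        (hasSum_sq_of_norm_eq_one (Φ.orthonormal.1 s)) n)).trans (abs_le_sqrt (hA s))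
    refine (sq_le_sq₀ (abs_nonneg _) (by positivity)).1 ?_
    calc |Φ s p * Φ s n| ^ 2 = |Φ s p * Φ s n| * |Φ s p * Φ s n| := sq _
      _ ≤ t ^ 2 * (D * exp (-a * |(n : ℝ) - p|)) ^ 2 := by gcongr; exact hD s n
      _ = (t * |D| * exp (-a * |(n : ℝ) - p|)) ^ 2 := by simp only [mul_pow, sq_abs]; ring
  have hone : 1 ≤ t * |D| * T := by
    simpa only [hsum.tsum_eq] using one_le_tsum_of_abs_mul_le Φ p hsum.summable hbound
  have hA0 : 0 ≤ A := by
    obtain ⟨s⟩ := nonempty_of_hilbertBasis Φ p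
    exact (sq_nonneg _).trans (hA s)
  calc (1 : ℝ) ≤ (t * |D| * T) ^ 4 := one_le_pow₀ hone
    _ = (t ^ 2) ^ 2 * (|D| ^ 2) ^ 2 * T ^ 4 := by ring
    _ = A * (D * T) ^ 4 := by rw [sq_sqrt (sqrt_nonneg A), sq_sqrt hA0, sq_abs]; ring

end ExponentialSums

section Eigenfunctions

variable {g h φ ψ : ℤ → ℝ} {E : ℝ}

/-- The reflection `n ↦ φ(N - n)` of a sequence in the point `N / 2`. -/
def reflect (N : ℤ) (φ : ℤ → ℝ) : ℤ → ℝ := fun n => φ (N - n)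

/-- The Wronskian of two sequences; for solutions of Schrödinger equations at the same energy its
variation is controlled by the difference of the potentials. -/
def wronskian (φ ψ : ℤ → ℝ) (n : ℤ) : ℝ := φ (n + 1) * ψ n - φ n * ψ (n + 1)

lemma isEigenfunction_reflect (hφ : IsEigenfunction g E φ) (N : ℤ) :
    IsEigenfunction (reflect N g) E (reflect N φ) := by
  intro n
  have h := hφ (N - n)
  simp only [reflect]
  rw [show N - (n + 1) = N - n - 1 by ring, show N - (n - 1) = N - n + 1 by ring]
  linarith

lemma hasSum_sq_reflect {c : ℝ} (hφ : HasSum (fun n => φ n ^ 2) c) (N : ℤ) :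
    HasSum (fun n => reflect N φ n ^ 2) c :=
  (Equiv.subLeft N).hasSum_iff.2 hφ

lemma IsEigenfunction.abs_energy_le {M : ℝ} (hφ : IsEigenfunction g E φ)
    (hbdd : BddAbove (Set.range fun n => |φ n|)) (hne : φ ≠ 0) (hM : ∀ n, |g n| ≤ M) :
    |E| ≤ M + 2 := by
  set X := ⨆ n, |φ n|
  have hle n : |φ n| ≤ X := le_ciSup hbdd n
  obtain ⟨m, hm⟩ := Function.ne_iff.1 hne
  have hX : 0 < X := (abs_pos.2 hm).trans_le (hle m)
  have hpoint n : |E| * |φ n| ≤ (M + 2) * X := by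
    calc |E| * |φ n| = |φ (n + 1) + φ (n - 1) + g n * φ n| := by rw [← abs_mul, hφ n]
      _ ≤ |φ (n + 1)| + |φ (n - 1)| + |g n| * |φ n| := by
          rw [← abs_mul]; exact abs_add_three _ _ _
      _ ≤ X + X + M * X := by
          gcongr
          exacts [hle _, hle _, (abs_nonneg _).trans (hM n), hM n, hle n]
      _ = (M + 2) * X := by ring
  refine le_of_mul_le_mul_right ?_ hX
  rw [mul_iSup_of_nonneg (abs_nonneg E)]
  exact ciSup_le hpoint

lemma IsEigenfunction.wronskian_add_one (hφ : IsEigenfunction g E φ)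
    (hψ : IsEigenfunction h E ψ) (n : ℤ) :
    wronskian φ ψ (n + 1) =
      wronskian φ ψ n + (h (n + 1) - g (n + 1)) * (φ (n + 1) * ψ (n + 1)) := by
  have h₁ := hφ (n + 1)
  have h₂ := hψ (n + 1)
  rw [add_sub_cancel_right] at h₁ h₂
  simp only [wronskian]
  linear_combination ψ (n + 1) * h₁ - φ (n + 1) * h₂

lemma tendsto_wronskian_add_natCast (hφ : Tendsto φ cofinite (nhds 0))
    (hψ : Tendsto ψ cofinite (nhds 0)) (n : ℤ) :
    Tendsto (fun k : ℕ => wronskian φ ψ (n + k)) atTop (nhds 0) := by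
  have hshift (j : ℤ) {u : ℤ → ℝ} (hu : Tendsto u cofinite (nhds 0)) :
      Tendsto (fun k : ℕ => u (n + k + j)) atTop (nhds 0) := by
    rw [← Nat.cofinite_eq_atTop]
    exact hu.comp (Function.Injective.tendsto_cofinite fun a b hab => by simpa using hab)
  simpa [wronskian] using
    ((hshift 1 hφ).mul (hshift 0 hψ)).sub ((hshift 0 hφ).mul (hshift 1 hψ))

lemma IsEigenfunction.abs_wronskian_le {η : ℝ} (hφ : IsEigenfunction g E φ)
    (hψ : IsEigenfunction h E ψ) (hφ2 : HasSum (fun n => φ n ^ 2) 1)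
    (hψ2 : HasSum (fun n => ψ n ^ 2) 1) (hη : ∀ m, |h m - g m| ≤ η) (n : ℤ) :
    |wronskian φ ψ n| ≤ η := by
  have hη0 : 0 ≤ η := (abs_nonneg _).trans (hη 0)
  have hsum := summable_abs_mul hφ2.summable hψ2.summable
  have hinj : Function.Injective fun k : ℕ => n + k + 1 := fun a b hab => by simpa using hab
  have hstep (k : ℕ) : dist (wronskian φ ψ (n + k)) (wronskian φ ψ (n + k.succ)) ≤
      η * |φ (n + k + 1) * ψ (n + k + 1)| := by
    rw [Nat.cast_succ, ← add_assoc, hφ.wronskian_add_one hψ, dist_self_add_right, norm_mul,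
      norm_eq_abs, norm_eq_abs]
    gcongr
    exact hη _
  have htotal := dist_le_tsum_of_dist_le_of_tendsto₀ _ hstep
    ((hsum.comp_injective hinj).mul_left η) (tendsto_wronskian_add_natCast
      (tendsto_cofinite_zero_of_summable_sq hφ2.summable)
      (tendsto_cofinite_zero_of_summable_sq hψ2.summable) n)
  rw [Nat.cast_zero, add_zero, dist_zero_right, norm_eq_abs, tsum_mul_left] at htotal
  calc |wronskian φ ψ n| ≤ η * ∑' k : ℕ, |φ (n + k + 1) * ψ (n + k + 1)| := htotal
    _ ≤ η * ∑' m, |φ m * ψ m| := by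
        gcongr
        exact tsum_comp_le_tsum_of_inj hsum (fun _ => abs_nonneg _) hinj
    _ ≤ η := mul_le_of_le_one_right hη0 (tsum_abs_mul_le_one hφ2 hψ2)

lemma abs_le_or_abs_le_of_abs_mul_le_sq {x y r : ℝ} (hr : 0 ≤ r) (hxy : |x * y| ≤ r ^ 2) :
    |x| ≤ r ∨ |y| ≤ r := by
  by_contra! hlt
  rw [abs_mul, sq] at hxy
  exact hxy.not_gt (mul_lt_mul'' hlt.1 hlt.2 hr hr)

/- In the even case `N = 2c` the Wronskian at `c` factors as `φ(c) (φ(c+1) - φ(c-1))`; in the odd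
case `N = 2c+1` it factors as `(φ(c+1) + φ(c)) (φ(c+1) - φ(c))`. The small factor decides the sign.
-/
lemma IsEigenfunction.exists_sign_of_abs_wronskian_reflect_le {N : ℤ} {L r : ℝ}
    (hφ : IsEigenfunction g E φ) (hL : |E - g (N / 2)| ≤ L) (hr : 0 ≤ r)
    (hW : |wronskian φ (reflect N φ) (N / 2)| ≤ r ^ 2) :
    ∃ σ : ℝ, |σ| = 1 ∧ |φ (N / 2) + σ * reflect N φ (N / 2)| ≤ (L + 2) * r ∧
      |φ (N / 2 + 1) + σ * reflect N φ (N / 2 + 1)| ≤ (L + 2) * r := by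
  have hLr : 0 ≤ L * r := mul_nonneg ((abs_nonneg _).trans hL) hr
  simp only [wronskian, reflect] at hW ⊢
  rcases Int.even_or_odd' N with ⟨c, rfl | rfl⟩
  · simp only [show 2 * c / 2 = c by lia, show 2 * c - c = c by ring,
      show 2 * c - (c + 1) = c - 1 by ring] at hL hW ⊢
    rw [show φ (c + 1) * φ c - φ c * φ (c - 1) = φ c * (φ (c + 1) - φ (c - 1)) by ring] at hW
    rcases abs_le_or_abs_le_of_abs_mul_le_sq hr hW with hval | hdiff
    · refine ⟨1, abs_one, ?_, ?_⟩
      · rw [one_mul]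
        linarith [abs_add_le (φ c) (φ c)]
      · calc |φ (c + 1) + 1 * φ (c - 1)| = |E - g c| * |φ c| := by
              rw [← abs_mul]; congr 1; linarith [hφ c]
          _ ≤ L * r := mul_le_mul hL hval (abs_nonneg _) ((abs_nonneg _).trans hL)
          _ ≤ (L + 2) * r := by linarith
    · refine ⟨-1, by simp, ?_, ?_⟩
      · rw [neg_one_mul, add_neg_cancel, abs_zero]
        linarith
      · rw [neg_one_mul, ← sub_eq_add_neg]
        linarith
  · simp only [show (2 * c + 1) / 2 = c by lia, show 2 * c + 1 - c = c + 1 by ring,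
      show 2 * c + 1 - (c + 1) = c by ring] at hW ⊢
    rw [show φ (c + 1) * φ (c + 1) - φ c * φ c = (φ (c + 1) + φ c) * (φ (c + 1) - φ c) by ring]
      at hW
    rcases abs_le_or_abs_le_of_abs_mul_le_sq hr hW with hsum | hdiff
    · refine ⟨1, abs_one, ?_, ?_⟩
      · rw [one_mul, add_comm]
        linarith
      · rw [one_mul]
        linarith
    · refine ⟨-1, by simp, ?_, ?_⟩
      · rw [neg_one_mul, ← sub_eq_add_neg, abs_sub_comm]
        linarith
      · rw [neg_one_mul, ← sub_eq_add_neg]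
        linarith

lemma abs_le_pow_mul_of_second_order_recurrence {v : ℕ → ℝ} {L R : ℝ} (hL : 0 ≤ L)
    (h₀ : |v 0| ≤ R) (h₁ : |v 1| ≤ R)
    (hv : ∀ k, |v (k + 2)| ≤ L * |v (k + 1)| + |v k| + R) (k : ℕ) :
    |v k| ≤ (L + 2) ^ k * R := by
  have hR : 0 ≤ R := (abs_nonneg _).trans h₀
  have hB : 1 ≤ L + 2 := by linarith
  suffices |v k| ≤ (L + 2) ^ k * R ∧ |v (k + 1)| ≤ (L + 2) ^ (k + 1) * R from this.1
  induction k with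
  | zero => exact ⟨by simpa using h₀, h₁.trans (by simpa using le_mul_of_one_le_left hR hB)⟩
  | succ k ih =>
    refine ⟨ih.2, (hv k).trans ?_⟩
    calc L * |v (k + 1)| + |v k| + R
        ≤ L * ((L + 2) ^ (k + 1) * R) + (L + 2) ^ (k + 1) * R + (L + 2) ^ (k + 1) * R := by
          gcongr
          · exact ih.2
          · exact ih.1.trans (by gcongr; exact k.le_succ)
          · exact le_mul_of_one_le_left hR (one_le_pow₀ hB)
      _ = (L + 2) ^ (k + 1 + 1) * R := by ring

lemma IsEigenfunction.abs_add_mul_le {L R σ : ℝ} {c : ℤ} (hφ : IsEigenfunction g E φ)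
    (hψ : IsEigenfunction h E ψ) (hψ1 : ∀ n, |ψ n| ≤ 1) (hL : ∀ n, |E - g n| ≤ L)
    (hR : ∀ n, |h n - g n| ≤ R) (hσ : |σ| ≤ 1) (h₀ : |φ c + σ * ψ c| ≤ R)
    (h₁ : |φ (c + 1) + σ * ψ (c + 1)| ≤ R) (k : ℕ) :
    |φ (c + k) + σ * ψ (c + k)| ≤ (L + 2) ^ k * R := by
  set v : ℤ → ℝ := fun n => φ n + σ * ψ n
  refine abs_le_pow_mul_of_second_order_recurrence (v := fun k : ℕ => v (c + k))
    ((abs_nonneg _).trans (hL 0)) (by simpa using h₀) (by simpa using h₁) (fun k => ?_) k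
  set n := c + (k : ℤ) + 1
  have hrec : v (n + 1) = (E - g n) * v n - v (n - 1) - σ * ((h n - g n) * ψ n) := by
    simp only [v]
    linear_combination hφ n + σ * hψ n
  have herr : |σ * ((h n - g n) * ψ n)| ≤ R := by
    rw [abs_mul, abs_mul]
    exact (mul_le_of_le_one_left (by positivity) hσ).trans
      ((mul_le_of_le_one_right (abs_nonneg _) (hψ1 n)).trans (hR n))
  push_cast
  rw [show c + ((k : ℤ) + 2) = n + 1 by lia, show c + ((k : ℤ) + 1) = n by lia,
    show c + (k : ℤ) = n - 1 by lia, hrec]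
  calc |(E - g n) * v n - v (n - 1) - σ * ((h n - g n) * ψ n)|
      ≤ |(E - g n) * v n| + |v (n - 1)| + |σ * ((h n - g n) * ψ n)| :=
        (abs_sub _ _).trans (by gcongr; exact abs_sub _ _)
    _ ≤ L * |v n| + |v (n - 1)| + R := by
        rw [abs_mul]
        gcongr
        exact hL n

lemma IsEigenfunction.abs_le_pow_mul_add_abs_reflect {N : ℤ} {L r : ℝ}
    (hφ : IsEigenfunction g E φ) (hφ2 : HasSum (fun n => φ n ^ 2) 1)
    (hL : ∀ n, |E - g n| ≤ L) (hr : 0 ≤ r) (hr1 : r ≤ 1)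
    (hg : ∀ m, |reflect N g m - g m| ≤ r ^ 2) (k : ℕ) :
    |φ (N / 2 + k)| ≤ (L + 2) ^ (k + 1) * r + |φ (N - (N / 2 + k))| := by
  have hL0 : 0 ≤ L := (abs_nonneg _).trans (hL 0)
  have hψ := isEigenfunction_reflect hφ N
  have hψ2 := hasSum_sq_reflect hφ2 N
  obtain ⟨σ, hσ, h₀, h₁⟩ := hφ.exists_sign_of_abs_wronskian_reflect_le (hL _) hr
    (hφ.abs_wronskian_le hψ hφ2 hψ2 hg _)
  have hR m : |reflect N g m - g m| ≤ (L + 2) * r := (hg m).trans (by nlinarith)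
  have hv := hφ.abs_add_mul_le hψ (abs_le_one_of_hasSum_sq hψ2) hL hR hσ.le h₀ h₁ k
  calc |φ (N / 2 + k)|
      ≤ |φ (N / 2 + k) + σ * φ (N - (N / 2 + k))| + |σ * φ (N - (N / 2 + k))| := by
        simpa using abs_sub (φ (N / 2 + k) + σ * φ (N - (N / 2 + k))) (σ * φ (N - (N / 2 + k)))
    _ ≤ (L + 2) ^ k * ((L + 2) * r) + |φ (N - (N / 2 + k))| := by
        rw [abs_mul σ, hσ, one_mul]
        gcongr
        exact hv
    _ = (L + 2) ^ (k + 1) * r + |φ (N - (N / 2 + k))| := by ring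

end Eigenfunctions

section OffCenter

variable {a β ε : ℝ}

/-- The site at distance about `β|N|` to the right of the centre of reflection `N / 2`, at which
eigenfunctions are tested. The division rounds down. -/
def offCenter (β : ℝ) (N : ℤ) : ℤ := N / 2 + ⌊β * |(N : ℝ)|⌋₊

lemma abs_offCenter_le (hβ : 0 ≤ β) (hβ1 : β ≤ 1) (N : ℤ) :
    |(offCenter β N : ℝ)| ≤ 2 * |(N : ℝ)| := by
  have hfloor : (⌊β * |(N : ℝ)|⌋₊ : ℝ) ≤ |(N : ℝ)| :=
    (Nat.floor_le (by positivity)).trans (mul_le_of_le_one_left (abs_nonneg _) hβ1)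
  have hhalf : |((N / 2 : ℤ) : ℝ)| ≤ |(N : ℝ)| := by
    exact_mod_cast (Int.abs_ediv_le_abs N 2)
  rw [offCenter, Int.cast_add, Int.cast_natCast]
  refine (abs_add_le _ _).trans ?_
  rw [Nat.abs_cast]
  linarith

lemma le_abs_sub_offCenter (β : ℝ) (N : ℤ) :
    2 * β * |(N : ℝ)| - 3 ≤ |((N - offCenter β N : ℤ) : ℝ) - offCenter β N| := by
  have hdist : 2 * (⌊β * |(N : ℝ)|⌋₊ : ℤ) - 1 ≤ |N - offCenter β N - offCenter β N| := by
    refine le_trans ?_ (neg_le_abs _)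
    simp only [offCenter]
    lia
  have hdist' : 2 * (⌊β * |(N : ℝ)|⌋₊ : ℝ) - 1 ≤
      |((N - offCenter β N : ℤ) : ℝ) - offCenter β N| := by
    exact_mod_cast hdist
  linarith [Nat.lt_floor_add_one (β * |(N : ℝ)|)]

lemma sq_correlation_bound_offCenter_le (ha : 0 ≤ a) (hβ : 0 ≤ β) (hβ1 : β ≤ 1) (hε : 0 ≤ ε)
    (hεβ : 2 * ε ≤ a * β) (C : ℝ) (N : ℤ) :
    (C * exp (ε * |(offCenter β N : ℝ)|) *
        exp (-a * |((N - offCenter β N : ℤ) : ℝ) - offCenter β N|)) ^ 2 ≤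
      C ^ 2 * exp (6 * a) * exp (-(2 * a * β) * |(N : ℝ)|) := by
  have hp := mul_le_mul_of_nonneg_left (abs_offCenter_le hβ hβ1 N) hε
  have hdist := mul_le_mul_of_nonneg_left (le_abs_sub_offCenter β N) ha
  have hrate := mul_le_mul_of_nonneg_right hεβ (abs_nonneg (N : ℝ))
  simp only [mul_assoc C, mul_assoc (C ^ 2), ← exp_add, mul_pow, ← exp_nat_mul]
  gcongr
  push_cast at hdist ⊢
  linarith

lemma pow_floor_succ_mul_exp_le {B d x : ℝ} (hB : 1 ≤ B) (hβ : 0 ≤ β) (hx : 0 ≤ x)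
    (hβd : (log B + 2 * a) * β ≤ d / 2) :
    B ^ (⌊β * x⌋₊ + 1) * exp (-(d / 2) * x) ≤ B * exp (-(2 * a * β) * x) := by
  have hB0 : 0 < B := by linarith
  have hfloor := mul_le_mul_of_nonneg_right (Nat.floor_le (mul_nonneg hβ hx)) (log_nonneg hB)
  have hrate := mul_le_mul_of_nonneg_right hβd hx
  rw [pow_succ', mul_assoc, ← exp_log (pow_pos hB0 _), log_pow, ← exp_add]
  gcongr
  linarith

lemma IsEigenfunction.sq_offCenter_le {g φ : ℤ → ℝ} {E L C d : ℝ} {N : ℤ}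
    (hφ : IsEigenfunction g E φ) (hφ2 : HasSum (fun n => φ n ^ 2) 1)
    (hL : ∀ n, |E - g n| ≤ L) (hd : 0 ≤ d)
    (hg : ∀ m, |g (N - m) - g m| ≤ exp (-d * |(N : ℝ)|)) (ha : 0 ≤ a) (hβ : 0 ≤ β) (hβ1 : β ≤ 1)
    (hβd : (log (L + 2) + 2 * a) * β ≤ d / 2) (hε : 0 ≤ ε) (hεβ : 2 * ε ≤ a * β)
    (hcorr : ∀ p n : ℤ, |φ p * φ n| ≤ (C * exp (ε * |(p : ℝ)|) * exp (-a * |(n : ℝ) - p|)) ^ 2) :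
    φ (offCenter β N) ^ 2 ≤ (L + 2 + C ^ 2 * exp (6 * a)) * exp (-(2 * a * β) * |(N : ℝ)|) := by
  set p := offCenter β N
  set r := exp (-(d / 2) * |(N : ℝ)|) with hr
  have hL1 : 1 ≤ L + 2 := by linarith [(abs_nonneg _).trans (hL 0)]
  have hr1 : r ≤ 1 := exp_le_one_iff.2 (by rw [neg_mul]; exact neg_nonpos.2 (by positivity))
  have hr2 : r ^ 2 = exp (-d * |(N : ℝ)|) := by
    rw [hr, ← exp_nat_mul]
    ring_nf
  have hsymm : |φ p| ≤ (L + 2) ^ (⌊β * |(N : ℝ)|⌋₊ + 1) * r + |φ (N - p)| :=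
    hφ.abs_le_pow_mul_add_abs_reflect hφ2 hL (exp_pos _).le hr1 (fun m => hr2 ▸ hg m) _
  calc φ p ^ 2 = |φ p| * |φ p| := by rw [abs_mul_abs_self, sq]
    _ ≤ |φ p| * ((L + 2) ^ (⌊β * |(N : ℝ)|⌋₊ + 1) * r + |φ (N - p)|) := by gcongr
    _ ≤ (L + 2) ^ (⌊β * |(N : ℝ)|⌋₊ + 1) * r + |φ p * φ (N - p)| := by
        rw [mul_add, abs_mul]
        exact add_le_add_left (mul_le_of_le_one_left (by positivity)
          (abs_le_one_of_hasSum_sq hφ2 p)) _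
    _ ≤ (L + 2) * exp (-(2 * a * β) * |(N : ℝ)|) +
          C ^ 2 * exp (6 * a) * exp (-(2 * a * β) * |(N : ℝ)|) :=
        add_le_add (pow_floor_succ_mul_exp_le hL1 hβ (abs_nonneg _) hβd)
          ((hcorr p (N - p)).trans (sq_correlation_bound_offCenter_le ha hβ hβ1 hε hεβ C N))
    _ = (L + 2 + C ^ 2 * exp (6 * a)) * exp (-(2 * a * β) * |(N : ℝ)|) := by ring

lemma exists_pos_le_one_mul_le (c : ℝ) {d : ℝ} (hd : 0 < d) :
    ∃ β : ℝ, 0 < β ∧ β ≤ 1 ∧ c * β ≤ d := by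
  refine ⟨min 1 (d / (|c| + 1)), by positivity, min_le_left _ _, ?_⟩
  calc c * min 1 (d / (|c| + 1)) ≤ (|c| + 1) * (d / (|c| + 1)) := by
        gcongr
        exacts [by linarith [le_abs_self c], min_le_right _ _]
    _ = d := by field_simp

end OffCenter

section Localization

/- `|c| ≤ |p| + |p - c|`, and the spare decay in `|p - c|` absorbs `e^{ε|p - c|}`. -/
lemma abs_mul_le_sq_of_localized {φ : ℤ → ℝ} {c : ℤ} {γ ε C : ℝ} (hε : 0 ≤ ε) (hεγ : 4 * ε ≤ γ)
    (hφ : ∀ n : ℤ, |φ n| ≤ C * exp (ε * |(c : ℝ)|) * exp (-γ * |(n : ℝ) - c|)) (p n : ℤ) :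
    |φ p * φ n| ≤ (C * exp (ε * |(p : ℝ)|) * exp (-(γ / 4) * |(n : ℝ) - p|)) ^ 2 := by
  have hcenter : |(c : ℝ)| ≤ |(p : ℝ)| + |(p : ℝ) - c| := by
    simpa using abs_sub (p : ℝ) (p - c)
  have hdist : |(n : ℝ) - p| ≤ |(n : ℝ) - c| + |(p : ℝ) - c| := by
    simpa using abs_sub ((n : ℝ) - c) (p - c)
  have hexp : ε * |(c : ℝ)| + -γ * |(p : ℝ) - c| + (ε * |(c : ℝ)| + -γ * |(n : ℝ) - c|) ≤
      2 * (ε * |(p : ℝ)| + -(γ / 4) * |(n : ℝ) - p|) := by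
    nlinarith [mul_le_mul_of_nonneg_left hcenter hε, abs_nonneg ((p : ℝ) - c),
      abs_nonneg ((n : ℝ) - c), mul_le_mul_of_nonneg_left hdist (show 0 ≤ γ by linarith)]
  calc |φ p * φ n| = |φ p| * |φ n| := abs_mul _ _
    _ ≤ C * exp (ε * |(c : ℝ)|) * exp (-γ * |(p : ℝ) - c|) *
          (C * exp (ε * |(c : ℝ)|) * exp (-γ * |(n : ℝ) - c|)) :=
        mul_le_mul (hφ p) (hφ n) (abs_nonneg _) ((abs_nonneg _).trans (hφ p))
    _ = C ^ 2 *
          exp (ε * |(c : ℝ)| + -γ * |(p : ℝ) - c| + (ε * |(c : ℝ)| + -γ * |(n : ℝ) - c|)) := by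
        simp only [exp_add]
        ring
    _ ≤ C ^ 2 * exp (2 * (ε * |(p : ℝ)| + -(γ / 4) * |(n : ℝ) - p|)) := by gcongr
    _ = (C * exp (ε * |(p : ℝ)|) * exp (-(γ / 4) * |(n : ℝ) - p|)) ^ 2 := by
        rw [two_mul, exp_add, exp_add]
        ring

lemma frequently_abs_sub_le_exp_of_lt_deltaPot {g : ℤ → ℝ} {d : ℝ} (hd : 0 ≤ d)
    (hdg : d < deltaPot g) :
    ∃ᶠ N : ℤ in cofinite, ∀ m, |g (N - m) - g m| ≤ exp (-d * |(N : ℝ)|) := by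
  have hfreq : ∃ᶠ N : ℤ in cofinite, d < -log (⨆ m : ℤ, |g (N - m) - g m|) / |(N : ℝ)| := by
    -- If the eventual upper bounds are unbounded below, `deltaPot g` has the junk value `sInf = 0`.
    refine frequently_lt_of_lt_limsup ?_ hdg
    by_contra hcob
    have hjunk := Real.sInf_of_not_bddBelow hcob
    rw [deltaPot, limsup_eq] at hdg
    exact (hdg.trans_eq hjunk).not_ge hd
  refine hfreq.mono fun N hN m => ?_
  have hN0 : (N : ℝ) ≠ 0 := fun h => by simp [h, hd.not_gt] at hN
  have hbdd : BddAbove (Set.range fun m : ℤ => |g (N - m) - g m|) := by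
    by_contra hunbdd
    simp [Real.iSup_of_not_bddAbove hunbdd, hd.not_gt] at hN
  rw [lt_div_iff₀ (abs_pos.2 hN0)] at hN
  exact (le_ciSup hbdd m).trans (le_exp_of_log_le (by linarith))

lemma one_le_mul_exp_of_reflection_close {ι : Type*} {Φ : HilbertBasis ι ℝ ℓ²(ℤ, ℝ)} {g : ℤ → ℝ}
    {M C a β d : ℝ} {N : ℤ} (hΦ : ∀ s, ∃ E, IsEigenfunction g E (Φ s)) (hM : ∀ n, |g n| ≤ M)
    (ha : 0 < a) (hβ : 0 ≤ β) (hβ1 : β ≤ 1) (hd : 0 ≤ d)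
    (hβd : (log (2 * M + 4) + 2 * a) * β ≤ d / 2)
    (hcorr : ∀ s (p n : ℤ), |Φ s p * Φ s n| ≤
      (C * exp (a * β / 8 * |(p : ℝ)|) * exp (-a * |(n : ℝ) - p|)) ^ 2)
    (hg : ∀ m, |g (N - m) - g m| ≤ exp (-d * |(N : ℝ)|)) :
    1 ≤ (2 * M + 4 + C ^ 2 * exp (6 * a)) * (C * ∑' n : ℤ, exp (-a * |(n : ℝ)|)) ^ 4 *
      exp (-(a * β) * |(N : ℝ)|) := by
  set K := 2 * M + 4 + C ^ 2 * exp (6 * a)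
  set T := ∑' n : ℤ, exp (-a * |(n : ℝ)|)
  set p := offCenter β N
  have haβ : 0 ≤ a * β := by positivity
  have hM0 : 0 ≤ M := (abs_nonneg _).trans (hM 0)
  have hsmall s : Φ s p ^ 2 ≤ K * exp (-(2 * a * β) * |(N : ℝ)|) := by
    obtain ⟨E, hE⟩ := hΦ s
    have hrow := hasSum_sq_of_norm_eq_one (Φ.orthonormal.1 s)
    have hE' : |E| ≤ M + 2 := by
      refine hE.abs_energy_le ⟨1, ?_⟩ (fun h0 => ?_) hM
      · rintro _ ⟨n, rfl⟩
        exact abs_le_one_of_hasSum_sq hrow n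
      · exact zero_ne_one (hasSum_zero.unique (by simpa [h0] using hrow))
    have hL n : |E - g n| ≤ 2 * M + 2 := (abs_sub _ _).trans (by linarith [hM n])
    have hbase : 2 * M + 2 + 2 = 2 * M + 4 := by ring
    simpa only [hbase] using hE.sq_offCenter_le hrow hL hd hg ha.le hβ hβ1 (by rwa [hbase])
      (by positivity) (by linarith) (hcorr s)
  calc 1 ≤ K * exp (-(2 * a * β) * |(N : ℝ)|) * (C * exp (a * β / 8 * |(p : ℝ)|) * T) ^ 4 :=
        one_le_mul_pow_of_correlation_decay Φ p ha hsmall fun s n => hcorr s p n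
    _ = K * (C * T) ^ 4 * exp (-(2 * a * β) * |(N : ℝ)| + 4 * (a * β / 8 * |(p : ℝ)|)) := by
        rw [exp_add, mul_pow, mul_pow, ← exp_nat_mul]
        push_cast
        ring
    _ ≤ K * (C * T) ^ 4 * exp (-(a * β) * |(N : ℝ)|) := by
        gcongr
        linarith [mul_le_mul_of_nonneg_left (abs_offCenter_le hβ hβ1 N) haβ]

end Localization

theorem no_SULE_of_deltaPot_pos
    (g : ℤ → ℝ) (hg : ∃ M : ℝ, ∀ n : ℤ, |g n| ≤ M)
    (hδ : 0 < deltaPot g) :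
    ¬ HasSULE g := by
  rintro ⟨Φ, ns, γ, hγ, hΦ, hloc⟩
  obtain ⟨M, hM⟩ := hg
  obtain ⟨d, hd, hdg⟩ := exists_between hδ
  have ha : 0 < γ / 4 := by positivity
  obtain ⟨β, hβ, hβ1, hβd⟩ :=
    exists_pos_le_one_mul_le (log (2 * M + 4) + 2 * (γ / 4)) (half_pos hd)
  have hε : 0 < γ / 4 * β / 8 := by positivity
  obtain ⟨C, hC⟩ := hloc _ hε
  have hcorr s := abs_mul_le_sq_of_localized hε.le (by nlinarith) (hC s)
  obtain ⟨N, hN, hlt⟩ := ((frequently_abs_sub_le_exp_of_lt_deltaPot hd.le hdg).and_eventually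
    (eventually_mul_exp_neg_mul_abs_lt_one _ (mul_pos ha hβ))).exists
  exact hlt.not_ge (one_le_mul_exp_of_reflection_close hΦ hM ha hβ.le hβ1 hd.le hβd hcorr hN)
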